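/- arXiv:1807.09111 — 11 statements merged into one kernel-verified Lean document; each statement's English description precedes it below -/
import Mathlib

section
/- Let k : Ω × Ω → ℝ^{m×m} be a matrix-valued kernel admitting a decomposition (k_i, Q_i)_{i=1}^p in which every scalar-valued kernel k_i is strictly positive definite, every matrix Q_i is symmetric positive semidefinite, and the sum Q_1 + … + Q_p is positive definite. Then k is strictly positive definite, i.e. for every n ∈ ℕ, every tuple of pairwise distinct points x_1,…,x_n ∈ Ω and every tuple of vectors α_1,…,α_n ∈ ℝ^m that are not all zero, Σ_{i=1}^n Σ_{j=1}^n α_iᵀ k(x_i,x_j) α_j > 0. -/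
open Matrix BigOperators

open scoped MatrixOrder Matrix.Norms.L2Operator in
lemma posSemidef_factor {m : ℕ} (A : Matrix (Fin m) (Fin m) ℝ) (hA : A.PosSemidef) :
    ∃ B : Matrix (Fin m) (Fin m) ℝ, A = Bᵀ * B := by
  obtain ⟨B, hB⟩ := CStarAlgebra.nonneg_iff_eq_star_mul_self.mp hA.nonneg
  exact ⟨B, by rw [hB, Matrix.star_eq_conjTranspose,
    Matrix.conjTranspose_eq_transpose_of_trivial]⟩

/-- A separable matrix-valued kernel whose scalar kernels are strictly
positive definite, whose matrices are symmetric positive semidefinite and whose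
matrix sum is positive definite, is strictly positive definite. -/
theorem separable_kernel_strictly_positive_definite
    {Ω : Type*} [Nonempty Ω] {m p : ℕ}
    (k : Ω → Ω → Matrix (Fin m) (Fin m) ℝ)
    (hker : ∀ x y, k x y = (k y x)ᵀ)
    (ks : Fin p → Ω → Ω → ℝ) (Q : Fin p → Matrix (Fin m) (Fin m) ℝ)
    (hkssym : ∀ i x y, ks i x y = ks i y x)
    (hQsym : ∀ i, (Q i).IsSymm)
    (hdecomp : ∀ x y, k x y = ∑ i, ks i x y • Q i)
    (hks_spd : ∀ i (n : ℕ) (x : Fin n → Ω), Function.Injective x →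
      ∀ c : Fin n → ℝ, c ≠ 0 → 0 < ∑ a, ∑ b, c a * c b * ks i (x a) (x b))
    (hQpsd : ∀ i, (Q i).PosSemidef)
    (hQsum : (∑ i, Q i).PosDef) :
    ∀ (n : ℕ) (x : Fin n → Ω), Function.Injective x →
      ∀ α : Fin n → Fin m → ℝ, α ≠ 0 →
        0 < ∑ a, ∑ b, α a ⬝ᵥ (k (x a) (x b)).mulVec (α b) := by
  intro n x hx α hα
  have hB : ∀ i, ∃ B : Matrix (Fin m) (Fin m) ℝ, Q i = Bᵀ * B := by
    intro i
    exact posSemidef_factor _ (hQpsd i)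
  choose B hB using hB
  have hQ : ∀ i (u v : Fin m → ℝ), u ⬝ᵥ (Q i).mulVec v
      = ∑ l, (B i).mulVec u l * (B i).mulVec v l := by
    intro i u v
    rw [hB, ← Matrix.mulVec_mulVec, Matrix.dotProduct_mulVec, Matrix.vecMul_transpose]
    rfl
  have key : ∑ a, ∑ b, α a ⬝ᵥ (k (x a) (x b)).mulVec (α b)
      = ∑ i, ∑ l, ∑ a, ∑ b,
        (B i).mulVec (α a) l * (B i).mulVec (α b) l * ks i (x a) (x b) := by
    have h1 : ∀ a b, α a ⬝ᵥ (k (x a) (x b)).mulVec (α b)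
        = ∑ i, ∑ l, (B i).mulVec (α a) l * (B i).mulVec (α b) l * ks i (x a) (x b) := by
      intro a b
      rw [hdecomp, Matrix.sum_mulVec, dotProduct_sum]
      refine Finset.sum_congr rfl fun i _ => ?_
      rw [Matrix.smul_mulVec, dotProduct_smul, hQ, smul_eq_mul, mul_comm, Finset.sum_mul]
    simp_rw [h1]
    have h2 : ∀ F : Fin n → Fin n → Fin p → Fin m → ℝ,
        ∑ a, ∑ b, ∑ i, ∑ l, F a b i l = ∑ i, ∑ l, ∑ a, ∑ b, F a b i l := by
      intro F
      calc _ = ∑ a, ∑ i, ∑ b, ∑ l, F a b i l :=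
            Finset.sum_congr rfl fun a _ => Finset.sum_comm
        _ = ∑ i, ∑ a, ∑ b, ∑ l, F a b i l := Finset.sum_comm
        _ = ∑ i, ∑ a, ∑ l, ∑ b, F a b i l :=
            Finset.sum_congr rfl fun i _ => Finset.sum_congr rfl fun a _ => Finset.sum_comm
        _ = _ := Finset.sum_congr rfl fun i _ => Finset.sum_comm
    exact h2 _
  have hnn : ∀ i l, 0 ≤ ∑ a, ∑ b,
      (B i).mulVec (α a) l * (B i).mulVec (α b) l * ks i (x a) (x b) := by
    intro i l
    by_cases h : (fun a => (B i).mulVec (α a) l) = 0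
    · have h' : ∀ a, (B i).mulVec (α a) l = 0 := fun a => congrFun h a
      simp [h']
    · exact (hks_spd i n x hx _ h).le
  obtain ⟨a, ha⟩ := Function.ne_iff.1 hα
  have hpos := hQsum.dotProduct_mulVec_pos (x := α a) ha
  have hex : ∃ i l, (B i).mulVec (α a) l ≠ 0 := by
    by_contra! hcon
    rw [Matrix.sum_mulVec, dotProduct_sum] at hpos
    simp only [star_trivial, hQ, hcon] at hpos
    simp at hpos
  obtain ⟨i, l, hil⟩ := hex
  rw [key]
  refine Finset.sum_pos' (fun i _ => Finset.sum_nonneg fun l _ => hnn i l)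
    ⟨i, Finset.mem_univ _, Finset.sum_pos' (fun l _ => hnn i l) ⟨l, Finset.mem_univ _, ?_⟩⟩
  exact hks_spd i n x hx (fun a => (B i).mulVec (α a) l) (fun h => hil (congrFun h a))
end

section
/- Let K_1,…,K_p ∈ ℝ^{n×n} be symmetric positive definite matrices and let Q_1,…,Q_p ∈ ℝ^{m×m} be symmetric positive semidefinite matrices such that Q_1 + … + Q_p is positive definite. Then the matrix Σ_{i=1}^p K_i ⊗ Q_i ∈ ℝ^{nm×nm}, where ⊗ denotes the Kronecker product, is positive definite. -/
open Matrix BigOperators Kronecker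

/-- If `K₁,…,K_p` are symmetric positive definite `n×n` matrices and
`Q₁,…,Q_p` are symmetric positive semidefinite `m×m` matrices whose sum is positive
definite, then `∑ i, K i ⊗ₖ Q i` is positive definite. -/
theorem sum_kronecker_posDef {n m p : ℕ} (hn : 1 ≤ n) (hm : 1 ≤ m)
    (K : Fin p → Matrix (Fin n) (Fin n) ℝ)
    (Q : Fin p → Matrix (Fin m) (Fin m) ℝ)
    (hK : ∀ i, (K i).PosDef)
    (hQ : ∀ i, (Q i).PosSemidef)
    (hQsum : (∑ i, Q i).PosDef) :
    (∑ i, K i ⊗ₖ Q i).PosDef := by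
  have hP : ∀ i, (K i ⊗ₖ Q i).PosSemidef := fun i => (hK i).posSemidef.kronecker (hQ i)
  have hS := posSemidef_sum (x := fun i => K i ⊗ₖ Q i) Finset.univ (fun i _ => hP i)
  refine PosDef.of_dotProduct_mulVec_pos hS.isHermitian fun x hx => ?_
  refine lt_of_le_of_ne (hS.dotProduct_mulVec_nonneg x) fun h0 => hx ?_
  rw [Matrix.sum_mulVec, dotProduct_sum, eq_comm,
    Finset.sum_eq_zero_iff_of_nonneg (fun i _ => (hP i).dotProduct_mulVec_nonneg x)] at h0
  have h1 : ∀ i, ((1 : Matrix (Fin n) (Fin n) ℝ) ⊗ₖ Q i) *ᵥ x = 0 := fun i => by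
    have h2 := ((hP i).dotProduct_mulVec_zero_iff x).1 (h0 i (Finset.mem_univ i))
    have h3 : (K i)⁻¹ * K i = 1 :=
      Matrix.nonsing_inv_mul _ ((Matrix.isUnit_iff_isUnit_det _).1 (hK i).isUnit)
    have h4 : (1 : Matrix (Fin n) (Fin n) ℝ) ⊗ₖ Q i = ((K i)⁻¹ ⊗ₖ 1) * (K i ⊗ₖ Q i) := by
      rw [← mul_kronecker_mul, h3, Matrix.one_mul]
    rw [h4, ← Matrix.mulVec_mulVec, h2, Matrix.mulVec_zero]
  have h5 : ((1 : Matrix (Fin n) (Fin n) ℝ) ⊗ₖ ∑ i, Q i) = ∑ i, 1 ⊗ₖ Q i := by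
    ext a b
    simp [Matrix.sum_apply, Finset.mul_sum]
  have h6 : ((1 : Matrix (Fin n) (Fin n) ℝ) ⊗ₖ ∑ i, Q i) *ᵥ x = 0 := by
    rw [h5, Matrix.sum_mulVec]
    exact Finset.sum_eq_zero fun i _ => h1 i
  by_contra hx0
  have h7 := ((PosDef.one (n := Fin n) (R := ℝ)).kronecker hQsum).dotProduct_mulVec_pos hx0
  rw [h6] at h7
  simp at h7
end

section
/- Let Q_1,…,Q_p ∈ ℝ^{m×m} be symmetric matrices. Then the following are equivalent: (i) rank(Σ_{i=1}^p Q_i) = Σ_{i=1}^p rank(Q_i); (ii) the ranges R(Q_1),…,R(Q_p) (as subspaces of ℝ^m) are independent, i.e. their sum is direct, and R(Σ_{i=1}^p Q_i) = R(Q_1) ⊕ … ⊕ R(Q_p). -/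
open Matrix BigOperators

lemma aux_indep {m p : ℕ} (V : Fin p → Submodule ℝ (Fin m → ℝ)) :
    Module.finrank ℝ (⨆ i, V i : Submodule ℝ (Fin m → ℝ)) ≤ ∑ i, Module.finrank ℝ (V i) ∧
    (iSupIndep V ↔ Module.finrank ℝ (⨆ i, V i : Submodule ℝ (Fin m → ℝ))
      = ∑ i, Module.finrank ℝ (V i)) := by
  have hd : Module.finrank ℝ (DirectSum (Fin p) fun i => V i) = ∑ i, Module.finrank ℝ (V i) :=
    Module.finrank_directSum _ _
  have hr : (⨆ i, V i) = LinearMap.range (DirectSum.coeLinearMap V) :=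
    Submodule.iSup_eq_range_dfinsupp_lsum V
  have hrn := LinearMap.finrank_range_add_finrank_ker (K := ℝ)
    (V := DirectSum (Fin p) fun i => V i) (V₂ := Fin m → ℝ) (DirectSum.coeLinearMap V)
  rw [hr, ← hd]
  refine ⟨by omega, ?_⟩
  have hi : iSupIndep V ↔ Function.Injective (DirectSum.coeLinearMap V) :=
    iSupIndep_iff_dfinsupp_lsum_injective V
  have hk : LinearMap.ker (DirectSum.coeLinearMap V) = ⊥ ↔
      Function.Injective (DirectSum.coeLinearMap V) :=
    LinearMap.ker_eq_bot (M := DirectSum (Fin p) fun i => V i)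
  have hf : Module.Finite ℝ (LinearMap.ker (DirectSum.coeLinearMap V)) :=
    FiniteDimensional.finiteDimensional_submodule (K := ℝ)
      (V := DirectSum (Fin p) fun i => V i) _
  have hz : Module.finrank ℝ (LinearMap.ker (DirectSum.coeLinearMap V)) = 0 ↔
      LinearMap.ker (DirectSum.coeLinearMap V) = ⊥ :=
    Submodule.finrank_eq_zero (R := ℝ) (M := DirectSum (Fin p) fun i => V i)
  rw [hi, ← hk, ← hz]
  omega

/-- For symmetric matrices `Q₁,…,Q_p`, the rank of the sum equals the sum
of the ranks iff the ranges are independent (their sum is direct) and the range of the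
sum is the (direct) sum of the ranges. -/
theorem rank_sum_eq_sum_rank_iff_ranges_independent {m p : ℕ}
    (Q : Fin p → Matrix (Fin m) (Fin m) ℝ)
    (hQ : ∀ i, (Q i).IsSymm) :
    (∑ i, Q i).rank = ∑ i, (Q i).rank ↔
      (iSupIndep fun i => LinearMap.range (Q i).mulVecLin) ∧
        LinearMap.range (∑ i, Q i).mulVecLin
          = ⨆ i, LinearMap.range (Q i).mulVecLin := by
  obtain ⟨h1, h2⟩ := aux_indep fun i => LinearMap.range (Q i).mulVecLin
  have hle : LinearMap.range (∑ i, Q i).mulVecLin ≤ ⨆ i, LinearMap.range (Q i).mulVecLin := by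
    rintro _ ⟨x, rfl⟩
    rw [Matrix.mulVecLin_apply, Matrix.sum_mulVec]
    exact Submodule.sum_mem _ fun i _ =>
      Submodule.mem_iSup_of_mem i ⟨x, rfl⟩
  have h3 := Submodule.finrank_mono hle
  rw [h2]
  unfold Matrix.rank
  constructor
  · intro h
    exact ⟨by omega, Submodule.eq_of_le_of_finrank_le hle (by omega)⟩
  · rintro ⟨h, h'⟩
    rw [h', h]
end

section
/- Let k : Ω × Ω → ℝ^{m×m} be a matrix-valued kernel admitting a decomposition of length p. Then the following are equivalent: (i) p is minimal, i.e. every decomposition of k has length at least p; (ii) for every decomposition (k_i, Q_i)_{i=1}^p of k of length p, the family of functions {k_1,…,k_p} is linearly independent in the real vector space of functions Ω × Ω → ℝ, and the family of matrices {Q_1,…,Q_p} is linearly independent in ℝ^{m×m}. -/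
open Matrix BigOperators

/-- A decomposition of a matrix-valued kernel `k` of length `p`: a tuple of scalar-valued
kernels `ks i` and symmetric matrices `Q i` with `k x y = ∑ i, ks i x y • Q i`. -/
def IsDecomposition {Ω : Type*} {m : ℕ} (k : Ω → Ω → Matrix (Fin m) (Fin m) ℝ)
    {p : ℕ} (ks : Fin p → Ω → Ω → ℝ) (Q : Fin p → Matrix (Fin m) (Fin m) ℝ) : Prop :=
  (∀ i x y, ks i x y = ks i y x) ∧ (∀ i, (Q i).IsSymm) ∧
    ∀ x y, k x y = ∑ i, ks i x y • Q i

/-- For a separable kernel admitting a decomposition of length `p`, the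
length `p` is minimal iff for every decomposition of length `p` both the scalar kernels
and the matrices form linearly independent families. -/
theorem minimal_iff_linearIndependent {Ω : Type*} [Nonempty Ω] {m p : ℕ}
    (k : Ω → Ω → Matrix (Fin m) (Fin m) ℝ)
    (hker : ∀ x y, k x y = (k y x)ᵀ)
    (hex : ∃ (ks : Fin p → Ω → Ω → ℝ) (Q : Fin p → Matrix (Fin m) (Fin m) ℝ),
      IsDecomposition k ks Q) :
    (∀ (q : ℕ) (ks : Fin q → Ω → Ω → ℝ) (Q : Fin q → Matrix (Fin m) (Fin m) ℝ),
        IsDecomposition k ks Q → p ≤ q) ↔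
      (∀ (ks : Fin p → Ω → Ω → ℝ) (Q : Fin p → Matrix (Fin m) (Fin m) ℝ),
        IsDecomposition k ks Q →
          LinearIndependent ℝ ks ∧ LinearIndependent ℝ Q) := by
  constructor
  · intro hmin ks Q hd
    obtain ⟨h1, h2, h3⟩ := hd
    rcases p with _ | n
    · exact ⟨linearIndependent_empty_type, linearIndependent_empty_type⟩
    constructor
    · by_contra hli
      obtain ⟨g, hg, i, hi⟩ := Fintype.not_linearIndependent_iff.1 hli
      have := hmin n (fun j => ks (i.succAbove j))
        (fun j => Q (i.succAbove j) - (g (i.succAbove j) / g i) • Q i)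
        ⟨fun j x y => h1 _ x y, fun j => (h2 _).sub ((h2 i).smul _), ?_⟩
      · omega
      · intro x y
        have hxy := congrFun (congrFun hg x) y
        simp only [Finset.sum_apply, Pi.smul_apply, smul_eq_mul, Pi.zero_apply] at hxy
        rw [Fin.sum_univ_succAbove _ i] at hxy
        have e : ks i x y = - ∑ j, ks (i.succAbove j) x y * (g (i.succAbove j) / g i) := by
          have : ∑ j, ks (i.succAbove j) x y * (g (i.succAbove j) / g i)
              = (∑ j, g (i.succAbove j) * ks (i.succAbove j) x y) / g i := by
            rw [Finset.sum_div]
            exact Finset.sum_congr rfl fun j _ => by ring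
          rw [this]
          field_simp
          linarith
        rw [h3, Fin.sum_univ_succAbove _ i, e]
        simp only [smul_sub, smul_smul, Finset.sum_sub_distrib, ← Finset.sum_smul, neg_smul]
        abel
    · by_contra hli
      obtain ⟨g, hg, i, hi⟩ := Fintype.not_linearIndependent_iff.1 hli
      have := hmin n
        (fun j x y => ks (i.succAbove j) x y - (g (i.succAbove j) / g i) * ks i x y)
        (fun j => Q (i.succAbove j))
        ⟨fun j x y => by beta_reduce; rw [h1 (i.succAbove j) x y, h1 i x y], fun j => h2 _, ?_⟩
      · omega
      · intro x y
        rw [Fin.sum_univ_succAbove _ i] at hg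
        have e : Q i = - ∑ j, (g (i.succAbove j) / g i) • Q (i.succAbove j) := by
          have h4 : g i • Q i = - ∑ j, g (i.succAbove j) • Q (i.succAbove j) :=
            eq_neg_of_add_eq_zero_left hg
          have h5 : Q i = (g i)⁻¹ • (g i • Q i) := by rw [smul_smul, inv_mul_cancel₀ hi, one_smul]
          rw [h5, h4, smul_neg, Finset.smul_sum]
          simp only [smul_smul, div_eq_inv_mul]
        rw [h3, Fin.sum_univ_succAbove _ i]
        conv_lhs => rw [e]
        simp only [sub_smul, Finset.sum_sub_distrib, smul_neg, Finset.smul_sum, smul_smul]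
        simp only [mul_comm (ks i x y)]
        abel
  · intro h q ks Q hd
    by_contra hlt
    obtain ⟨r, rfl⟩ : ∃ r, p = q + (r + 1) := ⟨p - q - 1, by omega⟩
    obtain ⟨h1, h2, h3⟩ := hd
    have := (h (Fin.append ks 0) (Fin.append Q 0) ⟨?_, ?_, ?_⟩).1
    · exact this.ne_zero (Fin.natAdd q 0) (by simp)
    · intro i x y
      refine Fin.addCases (fun i => ?_) (fun i => ?_) i
      · simpa using h1 i x y
      · simp
    · intro i
      refine Fin.addCases (fun i => ?_) (fun i => ?_) i
      · simpa using h2 i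
      · simp
    · intro x y
      rw [Fin.sum_univ_add]
      simpa using h3 x y
end

section
/- Let k : Ω × Ω → ℝ^{m×m} be a matrix-valued kernel and let (k_i, Q_i)_{i=1}^p and (k̂_j, Q̂_j)_{j=1}^p be two uncoupled decompositions of k of the same length p, where p is minimal (every decomposition of k has length at least p). Then the decomposition is unique up to permutations and scalings: there exist a bijection ι : {1,…,p} → {1,…,p} and nonzero real numbers a_1,…,a_p such that for each i, k_i = a_i · k̂_{ι(i)} and Q̂_{ι(i)} = a_i · Q_i; in particular k_i(x,y) Q_i = k̂_{ι(i)}(x,y) Q̂_{ι(i)} for all x,y ∈ Ω. -/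
open Matrix BigOperators

/-- A family of matrices is uncoupled if the rank of the sum equals the sum of the ranks. -/
def IsUncoupled {m p : ℕ} (Q : Fin p → Matrix (Fin m) (Fin m) ℝ) : Prop :=
  (∑ i, Q i).rank = ∑ i, (Q i).rank

lemma aux_rank_add {m : ℕ} (A B : Matrix (Fin m) (Fin m) ℝ) :
    (A + B).rank ≤ A.rank + B.rank := by
  unfold Matrix.rank
  rw [Matrix.mulVecLin_add]
  exact (Submodule.finrank_mono (LinearMap.range_add_le _ _)).trans
    (Submodule.finrank_add_le_finrank_add_finrank _ _)

lemma aux_indep_s4 {m p : ℕ} (Q : Fin p → Matrix (Fin m) (Fin m) ℝ) (hu : IsUncoupled Q)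
    (z : Fin p → (Fin m → ℝ)) (h : ∑ i, Q i *ᵥ z i = 0) (i : Fin p) : Q i *ᵥ z i = 0 := by
  let F : (∀ i, LinearMap.range (Q i).mulVecLin) →ₗ[ℝ] (Fin m → ℝ) :=
    ∑ i, (LinearMap.range (Q i).mulVecLin).subtype ∘ₗ LinearMap.proj i
  have hF : ∀ v, F v = ∑ i, (v i : Fin m → ℝ) := by
    intro v; simp [F, LinearMap.sum_apply]
  have hle : LinearMap.range (∑ i, Q i).mulVecLin ≤ LinearMap.range F := by
    rintro _ ⟨x, rfl⟩
    refine ⟨fun i => ⟨Q i *ᵥ x, ⟨x, rfl⟩⟩, ?_⟩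
    rw [hF]
    simp [Matrix.sum_mulVec]
  have h1 := Submodule.finrank_mono hle
  have h2 := LinearMap.finrank_range_add_finrank_ker F
  rw [Module.finrank_pi_fintype] at h2
  have h3 : (∑ i, Q i).rank = ∑ i, (Q i).rank := hu
  unfold Matrix.rank at h3
  have h4 : Module.finrank ℝ (LinearMap.ker F) = 0 := by omega
  have h5 : LinearMap.ker F = ⊥ := Submodule.finrank_eq_zero.mp h4
  have h6 : (fun i => ⟨Q i *ᵥ z i, ⟨z i, rfl⟩⟩ : ∀ i, LinearMap.range (Q i).mulVecLin) ∈
      LinearMap.ker F := by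
    rw [LinearMap.mem_ker, hF]; exact h
  rw [h5, Submodule.mem_bot] at h6
  have := congrFun h6 i
  simpa using congrArg Subtype.val this

lemma aux_rank_sum {m : ℕ} {α : Type*} (s : Finset α) (Q : α → Matrix (Fin m) (Fin m) ℝ) :
    (∑ i ∈ s, Q i).rank ≤ ∑ i ∈ s, (Q i).rank := by
  classical
  induction s using Finset.induction_on with
  | empty => simp
  | insert a s ha ih =>
    rw [Finset.sum_insert ha, Finset.sum_insert ha]
    exact (aux_rank_add _ _).trans (by omega)

lemma aux_rank_smul {m : ℕ} (c : ℝ) (Q : Matrix (Fin m) (Fin m) ℝ) :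
    (c • Q).rank ≤ Q.rank := by
  have : c • Q = Q * (c • (1 : Matrix (Fin m) (Fin m) ℝ)) := by simp
  rw [this]
  exact Matrix.rank_mul_le_left _ _

lemma aux_lower {m p : ℕ} (Q : Fin p → Matrix (Fin m) (Fin m) ℝ) (hu : IsUncoupled Q)
    (c : Fin p → ℝ) :
    ∑ i, (if c i ≠ 0 then (Q i).rank else 0) ≤ (∑ i, c i • Q i).rank := by
  classical
  set A := ∑ i, c i • Q i with hA
  set B := ∑ i, (if c i ≠ 0 then Q i else 0) with hB
  have hker : LinearMap.ker A.mulVecLin ≤ LinearMap.ker B.mulVecLin := by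
    intro x hx
    rw [LinearMap.mem_ker, Matrix.mulVecLin_apply] at hx ⊢
    have h0 : ∑ i, Q i *ᵥ (c i • x) = 0 := by
      rw [← hx, hA, Matrix.sum_mulVec]
      simp [Matrix.smul_mulVec, Matrix.mulVec_smul]
    rw [hB, Matrix.sum_mulVec]
    refine Finset.sum_eq_zero fun i _ => ?_
    have := aux_indep_s4 Q hu _ h0 i
    rw [Matrix.mulVec_smul] at this
    split_ifs with hc
    · exact (smul_eq_zero.mp this).resolve_left hc
    · simp
  have h1 := Submodule.finrank_mono hker
  have h2 := LinearMap.finrank_range_add_finrank_ker A.mulVecLin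
  have h3 := LinearMap.finrank_range_add_finrank_ker B.mulVecLin
  have h4 : B.rank ≤ A.rank := by unfold Matrix.rank; omega
  have h5 : ∑ i, Q i = B + ∑ i, (if c i ≠ 0 then 0 else Q i) := by
    rw [hB, ← Finset.sum_add_distrib]
    refine Finset.sum_congr rfl fun i _ => ?_
    split_ifs <;> simp
  have h6 : (∑ i, (if c i ≠ 0 then 0 else Q i)).rank ≤
      ∑ i, (if c i ≠ 0 then 0 else (Q i).rank) := by
    refine (aux_rank_sum _ _).trans (Finset.sum_le_sum fun i _ => ?_)
    split_ifs <;> simp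
  have h7 : (∑ i, Q i).rank = ∑ i, (Q i).rank := hu
  have h8 : ∑ i, (Q i).rank = ∑ i, (if c i ≠ 0 then (Q i).rank else 0) +
      ∑ i, (if c i ≠ 0 then 0 else (Q i).rank) := by
    rw [← Finset.sum_add_distrib]
    refine Finset.sum_congr rfl fun i _ => ?_
    split_ifs <;> simp
  have h9 := aux_rank_add B (∑ i, (if c i ≠ 0 then 0 else Q i))
  rw [← h5] at h9
  omega

lemma aux_span {Ω : Type*} {m p : ℕ}
    (k : Ω → Ω → Matrix (Fin m) (Fin m) ℝ)
    (ks : Fin p → Ω → Ω → ℝ) (Q : Fin p → Matrix (Fin m) (Fin m) ℝ)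
    (h1 : IsDecomposition k ks Q)
    (hmin : ∀ (q : ℕ) (ks'' : Fin q → Ω → Ω → ℝ)
        (Q'' : Fin q → Matrix (Fin m) (Fin m) ℝ),
        IsDecomposition k ks'' Q'' → p ≤ q) :
    Submodule.span ℝ (Set.range Q) =
      Submodule.span ℝ (Set.range fun t : Ω × Ω => k t.1 t.2) ∧ LinearIndependent ℝ Q := by
  obtain ⟨hs, hQ, hk⟩ := h1
  set W := Submodule.span ℝ (Set.range fun t : Ω × Ω => k t.1 t.2) with hW
  have hmem : ∀ x y, k x y ∈ W := fun x y => Submodule.subset_span ⟨(x, y), rfl⟩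
  have hsym : ∀ x y, k x y = k y x := by
    intro x y; rw [hk, hk]; exact Finset.sum_congr rfl fun i _ => by rw [hs]
  have hWs : ∀ A ∈ W, A.IsSymm := by
    intro A hA
    induction hA using Submodule.span_induction with
    | mem A h =>
      obtain ⟨t, rfl⟩ := h
      change (k t.1 t.2)ᵀ = k t.1 t.2
      rw [hk, Matrix.transpose_sum]
      exact Finset.sum_congr rfl fun i _ => by rw [Matrix.transpose_smul, hQ i]
    | zero => exact Matrix.isSymm_zero
    | add A B _ _ h1 h2 => exact h1.add h2
    | smul c A _ h => exact h.smul c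
  let b := Module.finBasis ℝ W
  have hp : p ≤ Module.finrank ℝ W := by
    refine hmin _ (fun i x y => b.repr ⟨k x y, hmem x y⟩ i) (fun i => (b i : Matrix _ _ ℝ))
      ⟨?_, fun i => hWs _ (b i).2, ?_⟩
    · intro i x y
      have : (⟨k x y, hmem x y⟩ : W) = ⟨k y x, hmem y x⟩ := Subtype.ext (hsym x y)
      simp only [this]
    · intro x y
      have := congrArg Subtype.val (b.sum_repr ⟨k x y, hmem x y⟩)
      rw [Submodule.coe_sum] at this
      exact this.symm
  have hle : W ≤ Submodule.span ℝ (Set.range Q) := by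
    rw [hW, Submodule.span_le]
    rintro _ ⟨t, rfl⟩
    change k t.1 t.2 ∈ _
    rw [hk]
    exact Submodule.sum_mem _ fun i _ => Submodule.smul_mem _ _ (Submodule.subset_span ⟨i, rfl⟩)
  have h3 := Submodule.finrank_mono hle
  have h4 : (Set.range Q).finrank ℝ ≤ Fintype.card (Fin p) := finrank_range_le_card Q
  rw [Fintype.card_fin] at h4
  unfold Set.finrank at h4
  refine ⟨(Submodule.eq_of_le_of_finrank_eq hle (by omega)).symm, ?_⟩
  rw [linearIndependent_iff_card_eq_finrank_span]
  unfold Set.finrank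
  rw [Fintype.card_fin]; omega

/-- Uncoupled decompositions of minimal length are unique up to
permutations and scalings. -/
theorem uncoupled_decomposition_unique {Ω : Type*} [Nonempty Ω] {m p : ℕ}
    (k : Ω → Ω → Matrix (Fin m) (Fin m) ℝ)
    (hker : ∀ x y, k x y = (k y x)ᵀ)
    (ks : Fin p → Ω → Ω → ℝ) (Q : Fin p → Matrix (Fin m) (Fin m) ℝ)
    (ks' : Fin p → Ω → Ω → ℝ) (Q' : Fin p → Matrix (Fin m) (Fin m) ℝ)
    (h1 : IsDecomposition k ks Q) (h2 : IsDecomposition k ks' Q')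
    (hu1 : IsUncoupled Q) (hu2 : IsUncoupled Q')
    (hmin : ∀ (q : ℕ) (ks'' : Fin q → Ω → Ω → ℝ)
        (Q'' : Fin q → Matrix (Fin m) (Fin m) ℝ),
        IsDecomposition k ks'' Q'' → p ≤ q) :
    ∃ (ι : Equiv.Perm (Fin p)) (a : Fin p → ℝ), (∀ i, a i ≠ 0) ∧
      ∀ i, ks i = (fun x y => a i * ks' (ι i) x y) ∧ Q' (ι i) = a i • Q i ∧
        ∀ x y, ks i x y • Q i = ks' (ι i) x y • Q' (ι i) := by
  classical
  obtain ⟨hs1, hl1⟩ := aux_span k ks Q h1 hmin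
  obtain ⟨hs2, hl2⟩ := aux_span k ks' Q' h2 hmin
  have hC : ∀ j, ∃ c : Fin p → ℝ, ∑ i, c i • Q i = Q' j := fun j =>
    (Submodule.mem_span_range_iff_exists_fun ℝ).mp
      (by rw [hs1, ← hs2]; exact Submodule.subset_span ⟨j, rfl⟩)
  have hD : ∀ j, ∃ c : Fin p → ℝ, ∑ i, c i • Q' i = Q j := fun j =>
    (Submodule.mem_span_range_iff_exists_fun ℝ).mp
      (by rw [hs2, ← hs1]; exact Submodule.subset_span ⟨j, rfl⟩)
  choose C hC using hC
  choose D hD using hD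
  have inj : ∀ c d : Fin p → ℝ, ∑ i, c i • Q i = ∑ i, d i • Q i → ∀ i, c i = d i := by
    intro c d h i
    have := Fintype.linearIndependent_iff.mp hl1 (fun i => c i - d i)
      (by simp only [sub_smul, Finset.sum_sub_distrib, h, sub_self]) i
    exact sub_eq_zero.mp this
  have hex : ∀ i, ∃ j, C j i ≠ 0 := by
    intro i
    by_contra! hcon
    have h := hD i
    simp only [← hC, Finset.smul_sum, smul_smul] at h
    rw [Finset.sum_comm] at h
    simp only [← Finset.sum_smul] at h
    have h' : Q i = ∑ l, (Pi.single i (1 : ℝ) : Fin p → ℝ) l • Q l := by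
      rw [Finset.sum_eq_single i] <;> simp +contextual
    have := inj _ _ (h.trans h') i
    simp [hcon] at this
  choose f hf using hex
  have hpos : ∀ i, 0 < (Q i).rank := by
    intro i
    rw [Nat.pos_iff_ne_zero]
    intro h
    apply hl1.ne_zero i
    unfold Matrix.rank at h
    have h' := LinearMap.range_eq_bot.mp (Submodule.finrank_eq_zero.mp h)
    ext a b
    have h'' := congrFun (LinearMap.congr_fun h' (Pi.single b 1)) a
    simpa using h''
  have hcount : ∑ i, ∑ j, (if C j i ≠ 0 then (Q i).rank else 0) ≤ ∑ i, (Q i).rank := by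
    rw [Finset.sum_comm]
    calc _ ≤ ∑ j, (Q' j).rank := Finset.sum_le_sum fun j _ => by
            rw [← hC j]; exact aux_lower Q hu1 (C j)
      _ = (∑ j, Q' j).rank := hu2.symm
      _ ≤ _ := by
        simp only [← hC]
        rw [Finset.sum_comm]
        simp only [← Finset.sum_smul]
        exact (aux_rank_sum _ _).trans (Finset.sum_le_sum fun i _ => aux_rank_smul _ _)
  have hge : ∀ i, (Q i).rank ≤ ∑ j, (if C j i ≠ 0 then (Q i).rank else 0) := by
    intro i
    have := Finset.single_le_sum (f := fun j => if C j i ≠ 0 then (Q i).rank else 0)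
      (fun _ _ => Nat.zero_le _) (Finset.mem_univ (f i))
    simpa [hf i] using this
  have huniq : ∀ i j, C j i ≠ 0 → j = f i := by
    intro i j hj
    by_contra hne
    have hlt : (Q i).rank < ∑ j, (if C j i ≠ 0 then (Q i).rank else 0) := by
      have h3 : ∑ j ∈ ({j, f i} : Finset (Fin p)), (if C j i ≠ 0 then (Q i).rank else 0) ≤
          ∑ j, (if C j i ≠ 0 then (Q i).rank else 0) :=
        Finset.sum_le_sum_of_subset (Finset.subset_univ _)
      rw [Finset.sum_pair hne, if_pos hj, if_pos (hf i)] at h3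
      have := hpos i
      omega
    have := Finset.sum_lt_sum (fun i _ => hge i) ⟨i, Finset.mem_univ i, hlt⟩
    omega
  have hsurj : Function.Surjective f := by
    intro j
    by_contra! hcon
    apply hl2.ne_zero j
    rw [← hC j]
    refine Finset.sum_eq_zero fun i _ => ?_
    by_cases h : C j i = 0
    · simp [h]
    · exact absurd (huniq i j h).symm (hcon i)
  have hbij : Function.Bijective f := Finite.surjective_iff_bijective.mp hsurj
  have hQ : ∀ i, Q' (f i) = C (f i) i • Q i := by
    intro i
    rw [← hC (f i), Finset.sum_eq_single i]
    · intro l _ hl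
      by_cases h : C (f i) l = 0
      · simp [h]
      · exact absurd (hbij.1 (huniq l (f i) h)).symm hl
    · simp
  have hks : ∀ i x y, ks i x y = C (f i) i * ks' (f i) x y := by
    intro i x y
    refine inj (fun i => ks i x y) (fun i => C (f i) i * ks' (f i) x y) ?_ i
    rw [← h1.2.2 x y, h2.2.2 x y, ← (Equiv.ofBijective f hbij).sum_comp]
    refine Finset.sum_congr rfl fun i _ => ?_
    rw [Equiv.ofBijective_apply, hQ i, smul_smul, mul_comm]
  refine ⟨Equiv.ofBijective f hbij, fun i => C (f i) i, hf, fun i => ⟨?_, hQ i, ?_⟩⟩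
  · funext x y; exact hks i x y
  · intro x y
    rw [Equiv.ofBijective_apply, hQ i, hks i, smul_smul, mul_comm]
end

section
/- Let k : Ω × Ω → ℝ^{m×m} be a matrix-valued kernel such that additionally k(x,y) = k(y,x) for all x,y ∈ Ω (so each value k(x,y) is a symmetric matrix). Then the following are equivalent: (i) k(x,y) k(x̃,ỹ) = k(x̃,ỹ) k(x,y) for all x,y,x̃,ỹ ∈ Ω; (ii) there exists an orthogonal matrix P ∈ ℝ^{m×m} such that Pᵀ k(x,y) P is a diagonal matrix for all x,y ∈ Ω; (iii) there exist p ≤ m and an uncoupled decomposition (k_i, Q_i)_{i=1}^p of k such that Q_i Q_j = 0 for all i ≠ j. -/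
open Matrix BigOperators

open Module.End in
theorem aux_simul_diag {ι : Type*} {m : ℕ} (A : ι → Matrix (Fin m) (Fin m) ℝ)
    (hs : ∀ i, (A i)ᵀ = A i) (hc : ∀ i j, A i * A j = A j * A i) :
    ∃ P : Matrix (Fin m) (Fin m) ℝ, Pᵀ * P = 1 ∧ ∀ i, (Pᵀ * A i * P).IsDiag := by
  let T : ι → EuclideanSpace ℝ (Fin m) →ₗ[ℝ] EuclideanSpace ℝ (Fin m) := fun i => Matrix.toEuclideanLin (A i)
  have hT : ∀ i, (T i).IsSymmetric := fun i => by
    refine Matrix.isSymmetric_toEuclideanLin_iff.mpr ?_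
    rw [Matrix.IsHermitian, Matrix.conjTranspose_eq_transpose_of_trivial, hs i]
  have hC : Pairwise (Function.onFun Commute T) := by
    intro i j _
    change T i * T j = T j * T i
    ext1 v
    have := congrArg (fun M => WithLp.toLp 2 (M *ᵥ (WithLp.ofLp v))) (hc i j)
    simpa [T, Matrix.toLpLin_apply, Matrix.mulVec_mulVec] using this
  have htop := LinearMap.IsSymmetric.iSup_iInf_eq_top_of_commute hT hC
  have horth := LinearMap.IsSymmetric.orthogonalFamily_iInf_eigenspaces hT
  let V : (ι → ℝ) → Submodule ℝ (EuclideanSpace ℝ (Fin m)) := fun χ => ⨅ i, eigenspace (T i) (χ i)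
  let b := fun χ => stdOrthonormalBasis ℝ (V χ)
  have hon := horth.orthonormal_sigma_orthonormal (v_family := fun χ => b χ)
    (fun χ => (b χ).orthonormal)
  have hfin : Finite (Σ χ, Fin (Module.finrank ℝ (V χ))) := hon.linearIndependent.finite
  have := Fintype.ofFinite (Σ χ, Fin (Module.finrank ℝ (V χ)))
  have hsp : ⊤ ≤ Submodule.span ℝ (Set.range fun a : Σ χ, Fin (Module.finrank ℝ (V χ)) =>
      ((V a.1).subtypeₗᵢ (b a.1 a.2))) := by
    rw [← htop]
    refine iSup_le fun χ => ?_
    intro v hv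
    have h1 : (⟨v, hv⟩ : V χ) ∈ Submodule.span ℝ (Set.range (b χ)) := by
      rw [← (b χ).coe_toBasis, (b χ).toBasis.span_eq]; trivial
    have h2 := Submodule.mem_map_of_mem (f := (V χ).subtype) h1
    rw [Submodule.map_span] at h2
    refine Submodule.span_mono ?_ h2
    rintro _ ⟨_, ⟨i, rfl⟩, rfl⟩
    exact ⟨⟨χ, i⟩, rfl⟩
  let B := OrthonormalBasis.mk hon hsp
  have hcard : Fintype.card (Σ χ, Fin (Module.finrank ℝ (V χ))) = Fintype.card (Fin m) := by
    rw [← Module.finrank_eq_card_basis B.toBasis]; simp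
  let e := Fintype.equivOfCardEq hcard
  let C := B.reindex e
  have hC1 : ∀ i j, ∃ c : ℝ, T i (C j) = c • C j := by
    intro i j
    refine ⟨(e.symm j).1 i, ?_⟩
    have h : C j ∈ V (e.symm j).1 := by
      simp only [C, B, OrthonormalBasis.reindex_apply, OrthonormalBasis.coe_mk]
      exact (b _ _).2
    exact mem_eigenspace_iff.mp ((Submodule.mem_iInf _).mp h i)
  have hdot : ∀ i j, ∑ x, C i x * C j x = if i = j then 1 else 0 := by
    intro i j
    have := orthonormal_iff_ite.mp C.orthonormal j i
    simpa [PiLp.inner_apply, eq_comm] using this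
  refine ⟨Matrix.of fun i j => C j i, ?_, ?_⟩
  · ext i j
    simp [Matrix.mul_apply, hdot, Matrix.one_apply]
  · intro i a c hac
    obtain ⟨r, hr⟩ := hC1 i c
    have hr' : ∀ x, ∑ y, A i x y * C c y = r * C c x := by
      intro x
      have := congrArg (fun v : EuclideanSpace ℝ (Fin m) => v x) hr
      simpa [T, Matrix.toLpLin_apply, Matrix.mulVec, dotProduct] using this
    rw [Matrix.mul_assoc, Matrix.mul_apply]
    simp only [Matrix.mul_apply, Matrix.transpose_apply, Matrix.of_apply, hr']
    have : ∀ x, C a x * (r * C c x) = r * (C a x * C c x) := fun x => by ring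
    simp [this, ← Finset.mul_sum, hdot, hac]

/-- Characterization of matrix-valued kernels with pairwise commuting
values: commutation of all values ↔ simultaneous diagonalizability by one orthogonal
matrix ↔ existence of an uncoupled decomposition of length `p ≤ m` with pairwise
annihilating matrices. -/
theorem commuting_kernel_characterization {Ω : Type*} [Nonempty Ω] {m : ℕ}
    (k : Ω → Ω → Matrix (Fin m) (Fin m) ℝ)
    (hker : ∀ x y, k x y = (k y x)ᵀ)
    (hsymm : ∀ x y, k x y = k y x) :
    ((∀ x y x' y', k x y * k x' y' = k x' y' * k x y) ↔
      (∃ P : Matrix (Fin m) (Fin m) ℝ, Pᵀ * P = 1 ∧ ∀ x y, (Pᵀ * k x y * P).IsDiag)) ∧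
    ((∀ x y x' y', k x y * k x' y' = k x' y' * k x y) ↔
      (∃ (p : ℕ), p ≤ m ∧ ∃ (ks : Fin p → Ω → Ω → ℝ)
          (Q : Fin p → Matrix (Fin m) (Fin m) ℝ),
        IsDecomposition k ks Q ∧ IsUncoupled Q ∧
          ∀ i j, i ≠ j → Q i * Q j = 0)) := by
  have h12 : (∀ x y x' y', k x y * k x' y' = k x' y' * k x y) →
      (∃ P : Matrix (Fin m) (Fin m) ℝ, Pᵀ * P = 1 ∧ ∀ x y, (Pᵀ * k x y * P).IsDiag) := by
    intro h
    obtain ⟨P, hP, hd⟩ := aux_simul_diag (fun z : Ω × Ω => k z.1 z.2)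
      (fun z => by rw [← hker, hsymm]) (fun z w => h _ _ _ _)
    exact ⟨P, hP, fun x y => hd (x, y)⟩
  have h23 : (∃ P : Matrix (Fin m) (Fin m) ℝ, Pᵀ * P = 1 ∧ ∀ x y, (Pᵀ * k x y * P).IsDiag) →
      (∃ (p : ℕ), p ≤ m ∧ ∃ (ks : Fin p → Ω → Ω → ℝ)
          (Q : Fin p → Matrix (Fin m) (Fin m) ℝ),
        IsDecomposition k ks Q ∧ IsUncoupled Q ∧
          ∀ i j, i ≠ j → Q i * Q j = 0) := by
    rintro ⟨P, hP, hd⟩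
    have hP' : P * Pᵀ = 1 := mul_eq_one_comm.mp hP
    have hsum : ∀ f : Fin m → ℝ, ∑ i, f i • (P * diagonal (Pi.single i (1 : ℝ)) * Pᵀ)
        = P * diagonal f * Pᵀ := by
      intro f
      have : diagonal f = ∑ i, f i • diagonal (Pi.single i (1 : ℝ)) := by
        ext a b
        simp only [Matrix.sum_apply, Matrix.smul_apply, diagonal_apply, Pi.single_apply]
        by_cases hab : a = b <;> simp [hab]
      rw [this, Finset.mul_sum, Finset.sum_mul]
      simp
    refine ⟨m, le_rfl, fun i x y => (Pᵀ * k x y * P) i i,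
      fun i => P * diagonal (Pi.single i (1 : ℝ)) * Pᵀ, ⟨?_, ?_, ?_⟩, ?_, ?_⟩
    · intro i x y
      simp only [hsymm x y]
    · intro i
      simp [Matrix.IsSymm, Matrix.transpose_mul, Matrix.mul_assoc]
    · intro x y
      rw [hsum (fun i => (Pᵀ * k x y * P) i i)]
      have : diagonal (fun i => (Pᵀ * k x y * P) i i) = Pᵀ * k x y * P := (hd x y).diagonal_diag
      rw [this]
      calc k x y = (P * Pᵀ) * k x y * (P * Pᵀ) := by simp [hP']
        _ = _ := by simp only [Matrix.mul_assoc]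
    · have h1 := hsum 1
      simp only [Pi.one_apply, one_smul] at h1
      have hu : IsUnit P.det := (Matrix.isUnit_iff_isUnit_det _).mp (IsUnit.of_mul_eq_one _ hP')
      have hu' : IsUnit (Pᵀ).det := by rwa [Matrix.det_transpose]
      have hr : ∀ i, (P * diagonal (Pi.single i (1 : ℝ)) * Pᵀ).rank = 1 := by
        intro i
        rw [Matrix.rank_mul_eq_left_of_isUnit_det _ _ hu',
          Matrix.rank_mul_eq_right_of_isUnit_det _ _ hu, Matrix.rank_diagonal]
        rw [Fintype.card_eq_one_iff]
        refine ⟨⟨i, by simp⟩, ?_⟩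
        rintro ⟨j, hj⟩
        by_contra hne
        exact hj (Pi.single_eq_of_ne (fun h => hne (Subtype.ext h)) _)
      unfold IsUncoupled
      rw [h1]
      simp only [hr]
      have : diagonal (1 : Fin m → ℝ) = 1 := Matrix.diagonal_one
      rw [this, Matrix.mul_one, hP', Matrix.rank_one]
      simp
    · intro i j hij
      calc P * diagonal (Pi.single i (1 : ℝ)) * Pᵀ * (P * diagonal (Pi.single j (1 : ℝ)) * Pᵀ)
          = P * (diagonal (Pi.single i (1 : ℝ)) * (Pᵀ * P) * diagonal (Pi.single j (1 : ℝ))) * Pᵀ := by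
            simp only [Matrix.mul_assoc]
        _ = 0 := by
          have : diagonal (Pi.single i (1 : ℝ)) * diagonal (Pi.single j (1 : ℝ)) = 0 := by
            rw [Matrix.diagonal_mul_diagonal, ← Matrix.diagonal_zero]
            congr 1
            ext a
            by_cases ha : a = i
            · subst ha; simp [hij]
            · simp [ha]
          rw [hP, Matrix.mul_one, this]; simp
  have h31 : (∃ (p : ℕ), p ≤ m ∧ ∃ (ks : Fin p → Ω → Ω → ℝ)
          (Q : Fin p → Matrix (Fin m) (Fin m) ℝ),
        IsDecomposition k ks Q ∧ IsUncoupled Q ∧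
          ∀ i j, i ≠ j → Q i * Q j = 0) →
      (∀ x y x' y', k x y * k x' y' = k x' y' * k x y) := by
    rintro ⟨p, -, ks, Q, ⟨-, -, hk⟩, -, hQ⟩ x y x' y'
    have hcomm : ∀ i j, Commute (Q i) (Q j) := by
      intro i j
      by_cases h : i = j
      · rw [h]
      · exact (hQ i j h).trans (hQ j i (Ne.symm h)).symm
    rw [hk x y, hk x' y']
    exact Commute.sum_left _ _ _ fun i _ => Commute.sum_right _ _ _ fun j _ =>
      ((hcomm i j).smul_left _).smul_right _
  exact ⟨⟨h12, fun h => h31 (h23 h)⟩, ⟨fun h => h23 (h12 h), h31⟩⟩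
end

section
/- Let k : Ω × Ω → ℝ^{m×m} be a positive definite matrix-valued kernel satisfying k(x,y) = k(y,x) for all x,y ∈ Ω, and suppose that k(x,y) k(x̃,ỹ) = k(x̃,ỹ) k(x,y) for all x,y,x̃,ỹ ∈ Ω. Then for every n ∈ ℕ the pointwise matrix power kⁿ, defined by kⁿ(x,y) := (k(x,y))ⁿ, is a positive definite matrix-valued kernel. -/
open Matrix BigOperators

theorem aux_decomp {ι : Type*} {m : ℕ} (A : ι → Matrix (Fin m) (Fin m) ℝ)
    (hs : ∀ p, (A p)ᵀ = A p) (hc : ∀ p q, A p * A q = A q * A p) (v : Fin m → ℝ) :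
    ∃ f : (ι → ℝ) →₀ (Fin m → ℝ), (∀ χ p, A p *ᵥ f χ = χ p • f χ) ∧
      f.sum (fun _ w => w) = v := by
  classical
  have h1 : ∀ p, (Matrix.toEuclideanLin (A p)).IsSymmetric := by
    intro p
    rw [Matrix.isSymmetric_toEuclideanLin_iff]
    simpa [Matrix.IsHermitian, Matrix.conjTranspose_eq_transpose_of_trivial] using hs p
  have h2 : Pairwise (Function.onFun Commute fun p => Matrix.toEuclideanLin (A p)) := by
    intro p q _
    apply LinearMap.ext
    intro x
    simp [Matrix.toLpLin_apply, Matrix.mulVec_mulVec, hc p q]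
  have h3 := LinearMap.IsSymmetric.iSup_iInf_eq_top_of_commute h1 h2
  have h4 : (WithLp.toLp 2 v : EuclideanSpace ℝ (Fin m)) ∈
    (⨆ χ : ι → ℝ, ⨅ i, Module.End.eigenspace (Matrix.toEuclideanLin (A i)) (χ i)) := by
    rw [h3]; trivial
  rw [Submodule.mem_iSup_iff_exists_finsupp] at h4
  obtain ⟨f, hf, hv⟩ := h4
  refine ⟨f.mapRange (fun w => WithLp.ofLp w) (WithLp.ofLp_zero 2), ?_, ?_⟩
  · intro χ p
    have := hf χ
    rw [Submodule.mem_iInf] at this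
    have := Module.End.mem_eigenspace_iff.1 (this p)
    have := congrArg WithLp.ofLp this
    rw [Finsupp.mapRange_apply]
    simpa [Matrix.toLpLin_apply] using this
  · rw [Finsupp.sum_mapRange_index (fun _ => rfl)]
    have := congrArg WithLp.ofLp hv
    simpa [Finsupp.sum] using this

theorem aux_pow {m : ℕ} (A : Matrix (Fin m) (Fin m) ℝ) (c : ℝ) (v : Fin m → ℝ)
    (h : A *ᵥ v = c • v) (n : ℕ) : (A ^ n) *ᵥ v = c ^ n • v := by
  induction n with
  | zero => simp
  | succ n ih =>
    rw [pow_succ, ← Matrix.mulVec_mulVec, h, Matrix.mulVec_smul, ih, smul_smul, pow_succ, mul_comm]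

theorem aux_orth {m : ℕ} (A : Matrix (Fin m) (Fin m) ℝ) (hs : Aᵀ = A) (c d : ℝ)
    (u v : Fin m → ℝ) (hu : A *ᵥ u = c • u) (hv : A *ᵥ v = d • v) (hcd : c ≠ d) :
    u ⬝ᵥ v = 0 := by
  have h : u ⬝ᵥ (A *ᵥ v) = (A *ᵥ u) ⬝ᵥ v := by
    rw [Matrix.dotProduct_mulVec, ← Matrix.mulVec_transpose, hs]
  rw [hu, hv] at h
  simp only [dotProduct_smul, smul_dotProduct, smul_eq_mul] at h
  have : (c - d) * (u ⬝ᵥ v) = 0 := by linarith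
  rcases mul_eq_zero.1 this with h | h
  · exact absurd (sub_eq_zero.1 h) hcd
  · exact h

theorem aux_psd_pow {N : ℕ} (M : Matrix (Fin N) (Fin N) ℝ) (hM : M.PosSemidef) (n : ℕ) :
    (Matrix.of fun a b => M a b ^ n).PosSemidef := by
  induction n with
  | zero =>
    have := Matrix.posSemidef_vecMulVec_self_star (fun _ : Fin N => (1 : ℝ))
    convert this using 1
    ext a b
    simp [Matrix.vecMulVec_apply]
  | succ n ih =>
    have h : (Matrix.of fun a b => M a b ^ (n + 1)) =
        Matrix.hadamard (Matrix.of fun a b => M a b ^ n) M := by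
      ext a b
      simp [pow_succ]
    rw [h]
    exact ih.hadamard hM

theorem aux_quad {N : ℕ} (M : Matrix (Fin N) (Fin N) ℝ) (x : Fin N → ℝ) :
    star x ⬝ᵥ (M *ᵥ x) = ∑ a, ∑ b, x a * x b * M a b := by
  simp only [dotProduct, Matrix.mulVec, Finset.mul_sum]
  refine Finset.sum_congr rfl fun a _ => Finset.sum_congr rfl fun b _ => ?_
  simp; ring

theorem aux_one {N m : ℕ} (A : Fin N × Fin N → Matrix (Fin m) (Fin m) ℝ)
    (hsw : ∀ a b, A (a, b) = A (b, a))
    (hpd : ∀ (α : Fin N → Fin m → ℝ), 0 ≤ ∑ a, ∑ b, α a ⬝ᵥ (A (a, b)) *ᵥ (α b))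
    (χ : Fin N × Fin N → ℝ) (v : Fin N → Fin m → ℝ)
    (hv : ∀ p a, A p *ᵥ v a = χ p • v a) (n : ℕ) :
    0 ≤ ∑ a, ∑ b, χ (a, b) ^ n * (v a ⬝ᵥ v b) := by
  by_cases h0 : ∀ a, v a = 0
  · simp [h0]
  push Not at h0
  obtain ⟨c, hc⟩ := h0
  have hpos : 0 < v c ⬝ᵥ v c := by
    refine lt_of_le_of_ne ?_ ?_
    · exact Finset.sum_nonneg fun i _ => mul_self_nonneg _
    · intro h; exact hc (dotProduct_self_eq_zero.1 h.symm)
  have hM : (Matrix.of fun a b => χ (a, b)).PosSemidef := by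
    refine Matrix.PosSemidef.of_dotProduct_mulVec_nonneg ?_ ?_
    · ext a b
      have h1 := hv (a, b) c
      rw [hsw, hv (b, a) c] at h1
      simpa using smul_left_injective ℝ hc h1
    · intro x
      rw [aux_quad]
      have h1 := hpd (fun a => x a • v c)
      simp only [Matrix.mulVec_smul, hv, dotProduct_smul, smul_dotProduct, smul_eq_mul] at h1
      have h2 : (∑ a, ∑ b, x b * (χ (a, b) * (x a * (v c ⬝ᵥ v c)))) =
          (∑ a, ∑ b, x a * x b * (Matrix.of fun a b => χ (a, b)) a b) * (v c ⬝ᵥ v c) := by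
        simp only [Finset.sum_mul]
        refine Finset.sum_congr rfl fun a _ => Finset.sum_congr rfl fun b _ => ?_
        simp; ring
      have h3 : 0 ≤ (∑ a, ∑ b, x a * x b * (Matrix.of fun a b => χ (a, b)) a b) *
          (v c ⬝ᵥ v c) := by
        rw [← h2]
        refine h1.trans_eq ?_
        refine Finset.sum_congr rfl fun a _ => Finset.sum_congr rfl fun b _ => ?_
        ring
      exact nonneg_of_mul_nonneg_left h3 hpos
  have hMn := aux_psd_pow _ hM n
  have : ∑ a, ∑ b, χ (a, b) ^ n * (v a ⬝ᵥ v b) =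
      ∑ i, ∑ a, ∑ b, v a i * v b i * χ (a, b) ^ n := by
    simp only [dotProduct, Finset.mul_sum]
    rw [Finset.sum_comm]
    rw [Finset.sum_comm]
    simp_rw [Finset.sum_comm (s := (Finset.univ : Finset (Fin m)))]
    refine Finset.sum_congr rfl fun a _ => ?_
    refine Finset.sum_congr rfl fun b _ => Finset.sum_congr rfl fun i _ => ?_
    ring
  rw [this]
  refine Finset.sum_nonneg fun i _ => ?_
  have h := hMn.dotProduct_mulVec_nonneg (fun a => v a i)
  rw [aux_quad] at h
  simpa using h

/-- If `k` is a positive definite matrix-valued kernel with symmetric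
values all of which commute with one another, then the pointwise matrix power `kⁿ`
is a positive definite matrix-valued kernel for every `n ∈ ℕ`. -/
theorem pow_kernel_positive_definite {Ω : Type*} [Nonempty Ω] {m : ℕ}
    (k : Ω → Ω → Matrix (Fin m) (Fin m) ℝ)
    (hker : ∀ x y, k x y = (k y x)ᵀ)
    (hsymm : ∀ x y, k x y = k y x)
    (hpd : ∀ (N : ℕ) (x : Fin N → Ω) (α : Fin N → Fin m → ℝ),
      0 ≤ ∑ a, ∑ b, α a ⬝ᵥ (k (x a) (x b)).mulVec (α b))
    (hcomm : ∀ x y x' y', k x y * k x' y' = k x' y' * k x y)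
    (n : ℕ) :
    (∀ x y, (k x y) ^ n = ((k y x) ^ n)ᵀ) ∧
      ∀ (N : ℕ) (x : Fin N → Ω) (α : Fin N → Fin m → ℝ),
        0 ≤ ∑ a, ∑ b, α a ⬝ᵥ ((k (x a) (x b)) ^ n).mulVec (α b) := by
  have hT : ∀ x y, (k x y)ᵀ = k x y := fun x y => by rw [hsymm x y, ← hker x y, hsymm]
  refine ⟨fun x y => by rw [Matrix.transpose_pow, hT, hsymm], ?_⟩
  intro N x α
  classical
  set A : Fin N × Fin N → Matrix (Fin m) (Fin m) ℝ := fun p => k (x p.1) (x p.2) with hA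
  have hd := fun a => aux_decomp A (fun p => hT _ _) (fun p q => hcomm _ _ _ _) (α a)
  choose f hf hsum using hd
  set s := Finset.univ.biUnion (fun a => (f a).support) with hs
  have hα : ∀ a, α a = ∑ χ ∈ s, f a χ := by
    intro a
    rw [← hsum a]
    exact Finsupp.sum_of_support_subset _
      (Finset.subset_biUnion_of_mem (fun a => (f a).support) (Finset.mem_univ a)) _ (by simp)
  have key : ∀ a b, α a ⬝ᵥ ((k (x a) (x b)) ^ n).mulVec (α b) =
      ∑ χ ∈ s, χ (a, b) ^ n * (f a χ ⬝ᵥ f b χ) := by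
    intro a b
    rw [hα a, hα b, Matrix.mulVec_sum, sum_dotProduct]
    refine Finset.sum_congr rfl fun χ hχ => ?_
    rw [dotProduct_sum, Finset.sum_eq_single_of_mem χ hχ]
    · rw [aux_pow _ _ _ (hf b χ (a, b)) n, dotProduct_smul, smul_eq_mul]
    · intro ψ _ hne
      rw [aux_pow _ _ _ (hf b ψ (a, b)) n, dotProduct_smul]
      obtain ⟨p, hp⟩ := Function.ne_iff.1 hne
      rw [aux_orth (A p) (hT _ _) _ _ _ _ (hf a χ p) (hf b ψ p) hp.symm, smul_zero]
  simp_rw [key]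
  have : ∑ a, ∑ b, ∑ χ ∈ s, χ (a, b) ^ n * (f a χ ⬝ᵥ f b χ) =
      ∑ χ ∈ s, ∑ a, ∑ b, χ (a, b) ^ n * (f a χ ⬝ᵥ f b χ) := by
    rw [Finset.sum_comm (s := s)]
    refine Finset.sum_congr rfl fun a _ => ?_
    rw [Finset.sum_comm]
  rw [this]
  exact Finset.sum_nonneg fun χ _ => aux_one A (fun a b => hsymm _ _) (fun α => hpd N x α) χ
    (fun a => f a χ) (fun p a => hf a χ p) n
end

section
/- Let Q_1,…,Q_p ∈ ℝ^{m×m} be symmetric matrices with rank(Σ_{i=1}^p Q_i) = Σ_{i=1}^p rank(Q_i), and assume Q_1 ≠ 0. Then there exists a vector c ∈ ℝ^m such that Q_1 c ≠ 0 and Q_i c = 0 for every i ∈ {2,…,p}. -/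
open Matrix BigOperators

/-- If `Q₁,…,Q_p` are symmetric matrices with
`rank (∑ i, Q i) = ∑ i, rank (Q i)` and `Q₁ ≠ 0`, then there is a vector `c` with
`Q₁ c ≠ 0` and `Q i c = 0` for all `i ≠ 1`. -/
theorem exists_vector_annihilating_others {m p : ℕ} (hp : 0 < p)
    (Q : Fin p → Matrix (Fin m) (Fin m) ℝ)
    (hQ : ∀ i, (Q i).IsSymm)
    (hrank : (∑ i, Q i).rank = ∑ i, (Q i).rank)
    (h0 : Q ⟨0, hp⟩ ≠ 0) :
    ∃ c : Fin m → ℝ, (Q ⟨0, hp⟩).mulVec c ≠ 0 ∧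
      ∀ i : Fin p, i ≠ ⟨0, hp⟩ → (Q i).mulVec c = 0 := by
  by_contra hcon
  have hc : ∀ c : Fin m → ℝ, (∀ i : Fin p, i ≠ ⟨0, hp⟩ → (Q i).mulVec c = 0) →
      (Q ⟨0, hp⟩).mulVec c = 0 := by
    intro c h
    by_contra h'
    exact hcon ⟨c, h', h⟩
  let L : (Fin m → ℝ) →ₗ[ℝ] ((i : {i : Fin p // i ≠ ⟨0, hp⟩}) →
      LinearMap.range (Q i.1).mulVecLin) :=
    LinearMap.pi fun i => (Q i.1).mulVecLin.rangeRestrict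
  have hker : LinearMap.ker L ≤ LinearMap.ker (∑ i, Q i).mulVecLin := by
    intro c h
    have h1 : ∀ i : Fin p, i ≠ ⟨0, hp⟩ → (Q i).mulVec c = 0 := by
      intro i hi
      have := congrFun (LinearMap.mem_ker.mp h) ⟨i, hi⟩
      exact congrArg Subtype.val this
    have h2 := hc c h1
    rw [LinearMap.mem_ker, Matrix.mulVecLin_apply, Matrix.sum_mulVec]
    refine Finset.sum_eq_zero fun i _ => ?_
    by_cases hi : i = ⟨0, hp⟩
    · rw [hi]; exact h2
    · exact h1 i hi
  have e1 := Submodule.finrank_mono hker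
  have e2 := LinearMap.finrank_range_add_finrank_ker L
  have e3 := LinearMap.finrank_range_add_finrank_ker (∑ i, Q i).mulVecLin
  have e4 := Submodule.finrank_le (LinearMap.range L)
  rw [Module.finrank_pi_fintype] at e4
  have e5 : ∑ i : {i : Fin p // i ≠ ⟨0, hp⟩}, 
      Module.finrank ℝ (LinearMap.range (Q i.1).mulVecLin) + (Q ⟨0, hp⟩).rank
      = ∑ i, (Q i).rank := by
    rw [Fintype.sum_eq_add_sum_subtype_ne _ (⟨0, hp⟩ : Fin p), add_comm]
    rfl
  change (∑ i, Q i).rank + _ = _ at e3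
  have e6 : (Q ⟨0, hp⟩).rank = 0 := by omega
  have e7 : LinearMap.range (Q ⟨0, hp⟩).mulVecLin = ⊥ := Submodule.finrank_eq_zero.mp e6
  rw [LinearMap.range_eq_bot] at e7
  apply h0
  apply Matrix.mulVec_injective
  funext v
  rw [Matrix.zero_mulVec]
  exact LinearMap.congr_fun e7 v
end

section
/- Let N ⊆ H be a closed subspace and x ∈ Ω, and define the matrix B(x) ∈ ℝ^{m×m} by B(x)_{ij} := ⟨K(x,e_i) − Π_N K(x,e_i), K(x,e_j) − Π_N K(x,e_j)⟩_H, where e_1,…,e_m is the standard basis of ℝ^m. Then for every f ∈ H, the Euclidean norm of the pointwise interpolation error satisfies ‖Φ(f)(x) − Φ(Π_N f)(x)‖_2 ≤ ‖B(x)‖_2^{1/2} · ‖f − Π_N f‖, where ‖B(x)‖_2 is the spectral norm (operator 2-norm) of B(x). -/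
open Matrix BigOperators
open scoped RealInnerProductSpace

/-- The spectral norm (operator 2-norm) of a square real matrix, i.e. the operator norm
of the induced map on Euclidean space. -/
noncomputable def matrixSpectralNorm {m : ℕ} (B : Matrix (Fin m) (Fin m) ℝ) : ℝ :=
  ‖Matrix.toEuclideanCLM (𝕜 := ℝ) B‖

/-- Euclidean-norm interpolation error bound:
`‖Φ(f)(x) − Φ(Π_N f)(x)‖₂ ≤ ‖B(x)‖₂^{1/2} · ‖f − Π_N f‖` where
`B(x)_{ij} = ⟪K(x,eᵢ) − Π_N K(x,eᵢ), K(x,eⱼ) − Π_N K(x,eⱼ)⟫`. -/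
theorem euclidean_interpolation_error_bound {Ω : Type*} {m : ℕ} {H : Type*}
    [NormedAddCommGroup H] [InnerProductSpace ℝ H]
    (k : Ω → Ω → Matrix (Fin m) (Fin m) ℝ)
    (hker : ∀ x y, k x y = (k y x)ᵀ)
    (Φ : H →ₗ[ℝ] Ω → Fin m → ℝ) (K : Ω → (Fin m → ℝ) → H)
    (hΦK : ∀ (x : Ω) (α : Fin m → ℝ) (y : Ω), Φ (K x α) y = (k y x).mulVec α)
    (hrep : ∀ (f : H) (x : Ω) (α : Fin m → ℝ), ⟪f, K x α⟫ = Φ f x ⬝ᵥ α)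
    (N : Submodule ℝ H) (hclosed : IsClosed (N : Set H)) [Submodule.HasOrthogonalProjection N]
    (x : Ω)
    (B : Matrix (Fin m) (Fin m) ℝ)
    (hB : ∀ i j, B i j =
      ⟪K x (Pi.single i 1) - Submodule.orthogonalProjection N (K x (Pi.single i 1)),
       K x (Pi.single j 1) - Submodule.orthogonalProjection N (K x (Pi.single j 1))⟫) :
    ∀ f : H,
      Real.sqrt (∑ i, (Φ f x i - Φ (Submodule.orthogonalProjection N f) x i) ^ 2)
        ≤ Real.sqrt (matrixSpectralNorm B) * ‖f - Submodule.orthogonalProjection N f‖ := by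
  intro f
  set g : H := f - (Submodule.orthogonalProjection N f : H) with hg
  set u : Fin m → H := fun i => K x (Pi.single i 1) -
    (Submodule.orthogonalProjection N (K x (Pi.single i 1)) : H) with hu
  set v : Fin m → ℝ := fun i => Φ f x i - Φ (Submodule.orthogonalProjection N f) x i with hv
  have hvi : ∀ i, v i = ⟪g, u i⟫ := by
    intro i
    have h1 : ⟪g, K x (Pi.single i 1)⟫ = v i := by
      rw [hrep]
      simp [hg, hv]
    have h2 : ⟪g, ((Submodule.orthogonalProjection N (K x (Pi.single i 1)) : N) : H)⟫ = 0 :=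
      Submodule.starProjection_inner_eq_zero f _ (Submodule.coe_mem _)
    simp only [hu]
    rw [inner_sub_right, h1, h2, sub_zero]
  set w : H := ∑ i, v i • u i with hw
  have hgw : ∑ i, v i ^ 2 = ⟪g, w⟫ := by
    rw [hw, inner_sum]
    refine Finset.sum_congr rfl fun i _ => ?_
    rw [real_inner_smul_right, ← hvi, sq]
  set V : EuclideanSpace ℝ (Fin m) := WithLp.toLp 2 v with hV
  have hVn : ‖V‖ = Real.sqrt (∑ i, v i ^ 2) := by
    rw [EuclideanSpace.norm_eq]
    simp [hV]
  have hww : ⟪w, w⟫ = ⟪V, Matrix.toEuclideanCLM (𝕜 := ℝ) B V⟫ := by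
    have hB' : ∀ i j, B i j = ⟪u i, u j⟫ := hB
    rw [hw, sum_inner]
    simp only [inner_sum, real_inner_smul_left, real_inner_smul_right, PiLp.inner_apply]
    refine Finset.sum_congr rfl fun i _ => ?_
    simp [hV, Matrix.mulVec, dotProduct, hB', Finset.sum_mul, Finset.mul_sum]
    refine Finset.sum_congr rfl fun j _ => ?_
    ring
  have hM : 0 ≤ matrixSpectralNorm B := norm_nonneg _
  have hwn : ‖w‖ ≤ Real.sqrt (matrixSpectralNorm B) * ‖V‖ := by
    refine (sq_le_sq₀ (norm_nonneg _) (by positivity)).1 ?_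
    rw [mul_pow, Real.sq_sqrt hM, ← real_inner_self_eq_norm_sq, hww]
    calc _ ≤ ‖V‖ * ‖Matrix.toEuclideanCLM (𝕜 := ℝ) B V‖ := real_inner_le_norm _ _
      _ ≤ ‖V‖ * (matrixSpectralNorm B * ‖V‖) := by
        gcongr
        exact ContinuousLinearMap.le_opNorm _ _
      _ = _ := by ring
  have hS : ‖V‖ ^ 2 ≤ ‖g‖ * (Real.sqrt (matrixSpectralNorm B) * ‖V‖) := by
    rw [hVn, Real.sq_sqrt (Finset.sum_nonneg fun i _ => sq_nonneg _), ← hVn, hgw]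
    exact (real_inner_le_norm _ _).trans (by gcongr)
  change Real.sqrt (∑ i, v i ^ 2) ≤ _
  rw [← hVn]
  rcases (norm_nonneg V).eq_or_lt with h | h
  · rw [← h]; positivity
  · refine le_of_mul_le_mul_right ?_ h
    linarith
end

section
/- Let N ⊆ H be a closed subspace and x ∈ Ω, and define the matrix B(x) ∈ ℝ^{m×m} by B(x)_{ij} := ⟨K(x,e_i) − Π_N K(x,e_i), K(x,e_j) − Π_N K(x,e_j)⟩_H, where e_1,…,e_m is the standard basis of ℝ^m. Then for every f ∈ H, the maximum (infinity) norm of the pointwise interpolation error satisfies ‖Φ(f)(x) − Φ(Π_N f)(x)‖_∞ ≤ (max_{i=1,…,m} B(x)_{ii})^{1/2} · ‖f − Π_N f‖. -/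
open Matrix BigOperators
open scoped RealInnerProductSpace

/-- Infinity-norm interpolation error bound:
`‖Φ(f)(x) − Φ(Π_N f)(x)‖_∞ ≤ (max_i B(x)_{ii})^{1/2} · ‖f − Π_N f‖` where
`B(x)_{ij} = ⟪K(x,eᵢ) − Π_N K(x,eᵢ), K(x,eⱼ) − Π_N K(x,eⱼ)⟫`.
(The default norm on `Fin m → ℝ` is the sup norm.) -/
theorem supNorm_interpolation_error_bound {Ω : Type*} {m : ℕ} {H : Type*}
    [NormedAddCommGroup H] [InnerProductSpace ℝ H]
    (k : Ω → Ω → Matrix (Fin m) (Fin m) ℝ)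
    (hker : ∀ x y, k x y = (k y x)ᵀ)
    (Φ : H →ₗ[ℝ] Ω → Fin m → ℝ) (K : Ω → (Fin m → ℝ) → H)
    (hΦK : ∀ (x : Ω) (α : Fin m → ℝ) (y : Ω), Φ (K x α) y = (k y x).mulVec α)
    (hrep : ∀ (f : H) (x : Ω) (α : Fin m → ℝ), ⟪f, K x α⟫ = Φ f x ⬝ᵥ α)
    (N : Submodule ℝ H) (hclosed : IsClosed (N : Set H)) [Submodule.HasOrthogonalProjection N]
    (x : Ω)
    (B : Matrix (Fin m) (Fin m) ℝ)
    (hB : ∀ i j, B i j =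
      ⟪K x (Pi.single i 1) - Submodule.orthogonalProjectionOnto N (K x (Pi.single i 1)),
       K x (Pi.single j 1) - Submodule.orthogonalProjectionOnto N (K x (Pi.single j 1))⟫) :
    ∀ f : H,
      ‖Φ f x - Φ (Submodule.orthogonalProjectionOnto N f) x‖
        ≤ Real.sqrt (⨆ i : Fin m, B i i) * ‖f - Submodule.orthogonalProjectionOnto N f‖ := by
  intro f
  rw [pi_norm_le_iff_of_nonneg (by positivity)]
  intro i
  set g : H := f - Submodule.orthogonalProjectionOnto N f with hg
  set v : H := K x (Pi.single i 1) with hv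
  set p : N := Submodule.orthogonalProjectionOnto N v with hp
  have h1 : (Φ f x - Φ (Submodule.orthogonalProjectionOnto N f) x) i = ⟪g, v⟫ := by
    rw [hv, hrep, hg, map_sub]
    simp
  have h2 : ⟪g, (p : H)⟫ = 0 :=
    Submodule.inner_left_of_mem_orthogonal p.2
      (Submodule.sub_starProjection_mem_orthogonal f)
  have h3 : ⟪g, v⟫ = ⟪g, v - (p : H)⟫ := by
    rw [inner_sub_right, h2, sub_zero]
  have h4 : ‖v - (p : H)‖ ≤ Real.sqrt (⨆ i : Fin m, B i i) := by
    apply Real.le_sqrt_of_sq_le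
    have h5 : ‖v - (p : H)‖ ^ 2 = B i i := by
      rw [hB i i]
      exact (real_inner_self_eq_norm_sq _).symm
    rw [h5]
    exact le_ciSup (f := fun i => B i i) (Set.finite_range _).bddAbove i
  rw [h1, h3, mul_comm]
  exact (norm_inner_le_norm _ _).trans (mul_le_mul_of_nonneg_left h4 (norm_nonneg _))
end

section
/- Let N ⊆ H be a closed subspace and x ∈ Ω, and define the matrix B(x) ∈ ℝ^{m×m} by B(x)_{ij} := ⟨K(x,e_i) − Π_N K(x,e_i), K(x,e_j) − Π_N K(x,e_j)⟩_H, where e_1,…,e_m is the standard basis of ℝ^m. Then for every f ∈ H, the 1-norm of the pointwise interpolation error satisfies ‖Φ(f)(x) − Φ(Π_N f)(x)‖_1 ≤ √m · ‖B(x)‖_2^{1/2} · ‖f − Π_N f‖, where ‖B(x)‖_2 is the spectral norm (operator 2-norm) of B(x). -/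
open Matrix BigOperators
open scoped RealInnerProductSpace

/-- One-norm interpolation error bound:
`‖Φ(f)(x) − Φ(Π_N f)(x)‖₁ ≤ √m · ‖B(x)‖₂^{1/2} · ‖f − Π_N f‖` where
`B(x)_{ij} = ⟪K(x,eᵢ) − Π_N K(x,eᵢ), K(x,eⱼ) − Π_N K(x,eⱼ)⟫`. -/
theorem oneNorm_interpolation_error_bound {Ω : Type*} {m : ℕ} {H : Type*}
    [NormedAddCommGroup H] [InnerProductSpace ℝ H]
    (k : Ω → Ω → Matrix (Fin m) (Fin m) ℝ)
    (hker : ∀ x y, k x y = (k y x)ᵀ)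
    (Φ : H →ₗ[ℝ] Ω → Fin m → ℝ) (K : Ω → (Fin m → ℝ) → H)
    (hΦK : ∀ (x : Ω) (α : Fin m → ℝ) (y : Ω), Φ (K x α) y = (k y x).mulVec α)
    (hrep : ∀ (f : H) (x : Ω) (α : Fin m → ℝ), ⟪f, K x α⟫ = Φ f x ⬝ᵥ α)
    (N : Submodule ℝ H) (hclosed : IsClosed (N : Set H)) [Submodule.HasOrthogonalProjection N]
    (x : Ω)
    (B : Matrix (Fin m) (Fin m) ℝ)
    (hB : ∀ i j, B i j =
      ⟪K x (Pi.single i 1) - Submodule.orthogonalProjection N (K x (Pi.single i 1)),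
       K x (Pi.single j 1) - Submodule.orthogonalProjection N (K x (Pi.single j 1))⟫) :
    ∀ f : H,
      ∑ i, |Φ f x i - Φ (Submodule.orthogonalProjection N f) x i|
        ≤ Real.sqrt m * Real.sqrt (matrixSpectralNorm B) * ‖f - Submodule.orthogonalProjection N f‖ := by
  intro f
  set v : Fin m → H := fun i =>
    K x (Pi.single i 1) - (Submodule.orthogonalProjection N (K x (Pi.single i 1)) : H) with hv
  set g : H := f - (Submodule.orthogonalProjection N f : H) with hg
  have hgN : ∀ u ∈ N, ⟪g, u⟫ = 0 := fun u hu =>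
    Submodule.starProjection_inner_eq_zero f u hu
  have h1 : ∀ i, Φ f x i - Φ (Submodule.orthogonalProjection N f : H) x i = ⟪g, v i⟫ := by
    intro i
    have h2 : ⟪g, v i⟫ = ⟪g, K x (Pi.single i 1)⟫ := by
      simp only [hv]
      rw [inner_sub_right, hgN _ (Submodule.coe_mem _), sub_zero]
    rw [h2, hrep, hg, map_sub]
    simp
  have hs : ∀ i, ∃ s : ℝ, |⟪g, v i⟫| = s * ⟪g, v i⟫ ∧ s ^ 2 = 1 := by
    intro i
    rcases abs_choice ⟪g, v i⟫ with h | h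
    · exact ⟨1, by rw [h, one_mul], by norm_num⟩
    · exact ⟨-1, by rw [h]; ring, by norm_num⟩
  choose s hs1 hs2 using hs
  have hsum : ∑ i, |Φ f x i - Φ (Submodule.orthogonalProjection N f : H) x i|
      = ⟪g, ∑ i, s i • v i⟫ := by
    rw [inner_sum]
    refine Finset.sum_congr rfl fun i _ => ?_
    rw [h1, hs1, inner_smul_right]
  have hnorm : ‖∑ i, s i • v i‖ ^ 2 ≤ m * matrixSpectralNorm B := by
    set S : EuclideanSpace ℝ (Fin m) := WithLp.toLp 2 s with hS
    have hSn : ‖S‖ ^ 2 = m := by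
      rw [EuclideanSpace.real_norm_sq_eq]
      simp [hS, hs2]
    have he : ‖∑ i, s i • v i‖ ^ 2 = ⟪S, Matrix.toEuclideanCLM (𝕜 := ℝ) B S⟫ := by
      rw [← real_inner_self_eq_norm_sq, sum_inner, PiLp.inner_apply]
      refine Finset.sum_congr rfl fun i _ => ?_
      rw [inner_sum]
      have : (Matrix.toEuclideanCLM (𝕜 := ℝ) B S) i = ∑ j, B i j * s j := rfl
      rw [this]
      simp only [hS, RCLike.inner_apply, conj_trivial, Finset.sum_mul]
      refine Finset.sum_congr rfl fun j _ => ?_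
      rw [inner_smul_left, inner_smul_right, hB]
      simp only [hv, conj_trivial]
      ring
    rw [he]
    calc _ ≤ ‖S‖ * ‖Matrix.toEuclideanCLM (𝕜 := ℝ) B S‖ := real_inner_le_norm _ _
      _ ≤ ‖S‖ * (‖Matrix.toEuclideanCLM (𝕜 := ℝ) B‖ * ‖S‖) := by
        gcongr
        exact ContinuousLinearMap.le_opNorm _ _
      _ = ‖S‖ ^ 2 * matrixSpectralNorm B := by
        unfold matrixSpectralNorm
        ring
      _ = _ := by rw [hSn]
  rw [hsum, ← Real.sqrt_mul (Nat.cast_nonneg m), mul_comm]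
  refine (real_inner_le_norm _ _).trans ?_
  gcongr
  exact Real.le_sqrt_of_sq_le hnorm
end
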